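/- The subgroup of GL₇(ℚ) generated by the matrices A and B is a finite group of order 6048, and it is isomorphic to the subgroup of the symmetric group on {1,…,28} generated by σ₁, σ₂, σ₃. -/

import Mathlib

open Equiv

/-- σ₁ = (3,8,23,20)(4,24,6,12)(7,9,14,22)(10,19,11,13)(15,16,21,18)(17,26,27,25), 0-indexed. -/
def sigma1 : Equiv.Perm (Fin 28) :=
  c[(2 : Fin 28), 7, 22, 19] * c[(3 : Fin 28), 23, 5, 11] * c[(6 : Fin 28), 8, 13, 21] *
    c[(9 : Fin 28), 18, 10, 12] * c[(14 : Fin 28), 15, 20, 17] * c[(16 : Fin 28), 25, 26, 24]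

/-- σ₂ = (1,9,20,12,19,23,6,16)(2,27,14,17,13,26,15,25)(3,24)(4,5,10,21,7,11,28,8), 0-indexed. -/
def sigma2 : Equiv.Perm (Fin 28) :=
  c[(0 : Fin 28), 8, 19, 11, 18, 22, 5, 15] * c[(1 : Fin 28), 26, 13, 16, 12, 25, 14, 24] *
    c[(2 : Fin 28), 23] * c[(3 : Fin 28), 4, 9, 20, 6, 10, 27, 7]

/-- σ₃ = (1,13,20,15,19,2,6,14)(4,9,10,12,7,23,28,16)(5,27,21,17,11,26,8,25)(22,24), 0-indexed. -/
def sigma3 : Equiv.Perm (Fin 28) :=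
  c[(0 : Fin 28), 12, 19, 14, 18, 1, 5, 13] * c[(3 : Fin 28), 8, 9, 11, 6, 22, 27, 15] *
    c[(4 : Fin 28), 26, 20, 16, 10, 25, 7, 24] * c[(21 : Fin 28), 23]

def Amat : Matrix (Fin 7) (Fin 7) ℚ :=
  !![-1,0,0,0,0,0,0; 0,-1,0,0,0,0,0; 0,1,0,0,0,1,0; -1,0,0,0,0,0,1;
     0,0,0,0,1,0,0; 0,1,1,0,0,0,0; -1,0,0,1,0,0,0]

def Bmat : Matrix (Fin 7) (Fin 7) ℚ :=
  !![0,-1,0,0,0,-1,0; 0,1,1,0,0,0,0; 0,-1,0,0,0,0,0; 1,0,0,0,0,0,0;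
     0,0,0,0,0,0,-1; 0,0,0,-1,0,0,1; 0,0,0,0,1,0,1]

def BmatInv : Matrix (Fin 7) (Fin 7) ℚ :=
  !![0,0,0,1,0,0,0; 0,0,-1,0,0,0,0; 0,1,1,0,0,0,0; 0,0,0,0,-1,-1,0;
     0,0,0,0,1,0,1; -1,0,1,0,0,0,0; 0,0,0,0,-1,0,0]

set_option maxHeartbeats 1000000 in
/-- The matrix A as an element of GL₇(ℚ) (it is an involution). -/
def AU : GL (Fin 7) ℚ :=
  ⟨Amat, Amat,
    by ext i j; fin_cases i <;> fin_cases j <;>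
      norm_num [Matrix.mul_apply, Fin.sum_univ_succ, Matrix.one_apply, Fin.ext_iff, Amat],
    by ext i j; fin_cases i <;> fin_cases j <;>
      norm_num [Matrix.mul_apply, Fin.sum_univ_succ, Matrix.one_apply, Fin.ext_iff, Amat]⟩

set_option maxHeartbeats 1000000 in
/-- The matrix B as an element of GL₇(ℚ). -/
def BU : GL (Fin 7) ℚ :=
  ⟨Bmat, BmatInv,
    by ext i j; fin_cases i <;> fin_cases j <;>
      norm_num [Matrix.mul_apply, Fin.sum_univ_succ, Matrix.one_apply, Fin.ext_iff,
        Bmat, BmatInv],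
    by ext i j; fin_cases i <;> fin_cases j <;>
      norm_num [Matrix.mul_apply, Fin.sum_univ_succ, Matrix.one_apply, Fin.ext_iff,
        Bmat, BmatInv]⟩

/-- If the orbit of `x` under the group generated by `S` is `O`, with transversal `t`, and every
Schreier generator lies in a subgroup `K` fixing `x`, then the group generated by `S` has order
`|O| * |K|`. -/
theorem card_closure_of_transversal {P α : Type*} [Group P] [Finite P] [MulAction P α]
    {S : Set P} {K : Subgroup P} {x : α} (O : Finset α) (t : α → P)
    (hK : K ≤ Subgroup.closure S) (hKx : ∀ k ∈ K, k • x = x) (hx : x ∈ O) (htx : t x = 1)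
    (ht : ∀ p ∈ O, t p ∈ Subgroup.closure S) (htp : ∀ p ∈ O, t p • x = p)
    (hS : ∀ s ∈ S, ∀ p ∈ O, s • p ∈ O ∧ ∃ k ∈ K, s * t p = t (s • p) * k) :
    Nat.card (Subgroup.closure S) = O.card * Nat.card K := by
  let f : O × K → Subgroup.closure S :=
    fun y ↦ ⟨t y.1 * y.2, mul_mem (ht _ y.1.2) (hK y.2.2)⟩
  have hf : Function.Bijective f := by
    constructor
    · rintro ⟨⟨p, hp⟩, k, hk⟩ ⟨⟨q, hq⟩, l, hl⟩ h
      have h : t p * k = t q * l := congrArg Subtype.val h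
      have hpq : p = q := by
        have := congrArg (· • x) h
        simpa only [mul_smul, hKx k hk, hKx l hl, htp p hp, htp q hq] using this
      subst hpq
      simpa using h
    · rintro ⟨g, hg⟩
      suffices ∃ p ∈ O, ∃ k ∈ K, t p * k = g by
        obtain ⟨p, hp, k, hk, h⟩ := this
        exact ⟨⟨⟨p, hp⟩, k, hk⟩, Subtype.ext h⟩
      rw [← Subgroup.mem_toSubmonoid, Subgroup.closure_toSubmonoid_of_finite] at hg
      induction hg using Submonoid.closure_induction_left with
      | one => exact ⟨x, hx, 1, one_mem K, by simp [htx]⟩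
      | mul_left s hs y _ ih =>
        obtain ⟨p, hp, k, hk, rfl⟩ := ih
        obtain ⟨hsp, l, hl, h⟩ := hS s hs p hp
        exact ⟨s • p, hsp, l * k, mul_mem hl hk, by rw [← mul_assoc, ← h, mul_assoc]⟩
  rw [← Nat.card_congr (Equiv.ofBijective f hf), Nat.card_prod, Nat.card_eq_fintype_card,
    Fintype.card_coe]

/-- Two groups generated by corresponding elements are isomorphic if the generating pairs lie in
a subgroup of the product which projects injectively to both factors. -/
theorem nonempty_closure_mulEquiv {P Q : Type*} [Group P] [Group Q] (M : Subgroup (P × Q))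
    (hfst : ∀ m ∈ M, m.1 = 1 → m.2 = 1) (hsnd : ∀ m ∈ M, m.2 = 1 → m.1 = 1)
    {T : Set (P × Q)} (hT : T ⊆ M) :
    Nonempty (Subgroup.closure (Prod.fst '' T) ≃* Subgroup.closure (Prod.snd '' T)) := by
  have hTM : Subgroup.closure T ≤ M := (Subgroup.closure_le M).2 hT
  have h₁ : Function.Injective ((MonoidHom.fst P Q).comp (Subgroup.closure T).subtype) := by
    rw [injective_iff_map_eq_one]
    exact fun m hm ↦ Subtype.ext (Prod.ext hm (hfst m (hTM m.2) hm))
  have h₂ : Function.Injective ((MonoidHom.snd P Q).comp (Subgroup.closure T).subtype) := by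
    rw [injective_iff_map_eq_one]
    exact fun m hm ↦ Subtype.ext (Prod.ext (hsnd m (hTM m.2) hm) hm)
  have e₁ : ((MonoidHom.fst P Q).comp (Subgroup.closure T).subtype).range =
      Subgroup.closure (Prod.fst '' T) := by
    rw [MonoidHom.range_comp, Subgroup.range_subtype, MonoidHom.map_closure]; rfl
  have e₂ : ((MonoidHom.snd P Q).comp (Subgroup.closure T).subtype).range =
      Subgroup.closure (Prod.snd '' T) := by
    rw [MonoidHom.range_comp, Subgroup.range_subtype, MonoidHom.map_closure]; rfl
  exact ⟨(MulEquiv.subgroupCongr e₁).symm.trans <| (MonoidHom.ofInjective h₁).symm.trans <|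
    (MonoidHom.ofInjective h₂).trans <| MulEquiv.subgroupCongr e₂⟩

/-- The pairs of a matrix of determinant one and a permutation such that the matrix permutes the
vectors `v i` up to sign as the permutation permutes the indices. -/
def signedPermSubgroup {n ι R : Type*} [Fintype n] [DecidableEq n] [CommRing R]
    (v : ι → n → R) : Subgroup (GL n R × Equiv.Perm ι) where
  carrier := {m | m.1.1.det = 1 ∧
    ∀ i, m.1.1.mulVec (v i) = v (m.2 i) ∨ m.1.1.mulVec (v i) = -v (m.2 i)}
  one_mem' := by simp
  mul_mem' := by
    rintro ⟨g, π⟩ ⟨h, ρ⟩ ⟨hg, hgv⟩ ⟨hh, hhv⟩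
    dsimp only at hg hgv hh hhv
    refine ⟨by simp [hg, hh], fun i ↦ ?_⟩
    simp only [Prod.mk_mul_mk, Units.val_mul, Equiv.Perm.mul_apply, ← Matrix.mulVec_mulVec]
    rcases hhv i with h₁ | h₁ <;> rcases hgv (ρ i) with h₂ | h₂ <;>
      simp [h₁, h₂, Matrix.mulVec_neg]
  inv_mem' := by
    rintro ⟨g, π⟩ ⟨hg, hgv⟩
    dsimp only at hg hgv
    refine ⟨by simp [Matrix.det_nonsing_inv, hg], fun i ↦ ?_⟩
    have hinv (w : n → R) : (g⁻¹).1.mulVec (g.1.mulVec w) = w := by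
      rw [Matrix.mulVec_mulVec, ← Units.val_mul, inv_mul_cancel, Units.val_one, Matrix.one_mulVec]
    have h := hgv (π⁻¹ i)
    rw [← Equiv.Perm.mul_apply, mul_inv_cancel, Equiv.Perm.one_apply] at h
    simp only [Prod.fst_inv, Prod.snd_inv]
    rcases h with h | h
    · exact .inl (by rw [← h, hinv])
    · exact .inr (by rw [← neg_eq_iff_eq_neg, ← Matrix.mulVec_neg, ← h, hinv])

/-- Vectors spanning 28 lines which are permuted by `A` and `B`; the labelling is chosen so that the
induced permutations generate the same group as `sigma1`, `sigma2` and `sigma3`. -/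
def lineVec : Fin 28 → Fin 7 → ℚ :=
  ![![0, 0, 1, 1, -1, 1, 1], ![0, 0, 0, 1, -1, 0, 1], ![1, 0, 0, 0, 0, 0, 0],
    ![0, 1, 0, 1, -1, 0, 0], ![0, 0, 0, 0, 1, 0, 0], ![0, 1, -1, 0, 1, -1, -1],
    ![0, 0, 0, 1, 0, 0, 0], ![1, -1, 1, 1, 0, 0, 1], ![0, 1, 0, 1, 0, -1, 0],
    ![0, 1, -1, 0, 0, -1, 0], ![0, 1, 0, 0, 0, 0, 0], ![1, -1, 1, 1, -1, 1, 1],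
    ![1, 0, 0, 1, 0, -1, 0], ![0, 0, 0, 0, 0, 0, 1], ![1, 0, 0, 0, 1, -1, 0],
    ![0, 0, 1, 1, -1, 0, 0], ![1, -1, 1, 0, 0, 1, 1], ![0, 0, 0, 0, 1, -1, -1],
    ![1, 0, 1, 1, 0, 0, 0], ![1, -1, 1, 0, 0, 0, 0], ![1, 0, 1, 1, -1, 0, 1],
    ![0, 1, 0, 0, 0, -1, -1], ![1, 0, 0, 1, 0, 0, 1], ![1, -1, 0, 0, 1, 0, 0],
    ![0, 0, 1, 0, 0, 0, 0], ![0, 0, 0, 0, 0, 1, 0], ![1, -1, 0, 0, 0, 0, 1],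
    ![0, 0, 1, 0, -1, 1, 0]]

theorem lineVec_injective_up_to_sign :
    ∀ i j, lineVec i = lineVec j ∨ lineVec i = -lineVec j → i = j := by
  decide +kernel

/-- The permutation of the 28 lines induced by `A`. -/
def permA : Equiv.Perm (Fin 28) := sigma1 * sigma1

/-- The permutation of the 28 lines induced by `B`. -/
def permB : Equiv.Perm (Fin 28) := sigma1 * sigma2 * sigma3 * sigma2 * sigma3

theorem Amat_mulVec_lineVec : ∀ i, Amat.mulVec (lineVec i) = lineVec (permA i) ∨
    Amat.mulVec (lineVec i) = -lineVec (permA i) := by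
  decide +kernel

theorem Bmat_mulVec_lineVec : ∀ i, Bmat.mulVec (lineVec i) = lineVec (permB i) ∨
    Bmat.mulVec (lineVec i) = -lineVec (permB i) := by
  decide +kernel

set_option maxHeartbeats 1000000 in
theorem det_Amat : Amat.det = 1 := by
  simp [Amat, Matrix.det_succ_row_zero, Fin.sum_univ_succ, Fin.succAbove]
  norm_num

set_option maxHeartbeats 1000000 in
theorem det_Bmat : Bmat.det = 1 := by
  simp [Bmat, Matrix.det_succ_row_zero, Fin.sum_univ_succ, Fin.succAbove]
  norm_num

/-- A matrix of determinant one fixing each of the 28 lines is the identity. -/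
theorem eq_one_of_mulVec_lineVec {g : Matrix (Fin 7) (Fin 7) ℚ} (hdet : g.det = 1)
    (hg : ∀ i, g.mulVec (lineVec i) = lineVec i ∨ g.mulVec (lineVec i) = -lineVec i) :
    g = 1 := by
  have hbasis : ∀ k, lineVec (![2, 10, 24, 6, 4, 25, 13] k) = Pi.single k 1 := by decide +kernel
  have hfull : ∀ k, lineVec 11 k ≠ 0 := by decide +kernel
  have hcol : ∀ k, ∃ c : ℚ, g.col k = c • Pi.single k 1 := fun k ↦ by
    have h := hg (![2, 10, 24, 6, 4, 25, 13] k)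
    rw [hbasis, Matrix.mulVec_single_one] at h
    rcases h with h | h
    · exact ⟨1, by simpa using h⟩
    · exact ⟨-1, by simpa using h⟩
  choose c hc using hcol
  have hdiag : g = Matrix.diagonal c := by
    ext i j
    have := congrFun (hc j) i
    rcases eq_or_ne i j with rfl | hij
    · simpa using this
    · simpa [hij] using this
  have hsign : ∃ δ : ℚ, ∀ k, c k = δ := by
    subst hdiag
    rcases hg 11 with h | h
    · refine ⟨1, fun k ↦ mul_right_cancel₀ (hfull k) ?_⟩
      simpa [Matrix.mulVec_diagonal] using congrFun h k
    · refine ⟨-1, fun k ↦ mul_right_cancel₀ (hfull k) ?_⟩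
      simpa [Matrix.mulVec_diagonal] using congrFun h k
  obtain ⟨δ, hδ⟩ := hsign
  have hδ1 : δ = 1 := by
    rw [hdiag, Matrix.det_diagonal] at hdet
    simp only [hδ, Finset.prod_const, Finset.card_univ, Fintype.card_fin] at hdet
    exact (Odd.strictMono_pow (by decide : Odd 7)).injective (by simpa using hdet)
  rw [hdiag, ← Matrix.diagonal_one]
  exact congrArg _ (funext fun k ↦ (hδ k).trans hδ1)

theorem nonempty_closure_mulEquiv_closure_perm :
    Nonempty ((Subgroup.closure {AU, BU} : Subgroup (GL (Fin 7) ℚ)) ≃*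
      (Subgroup.closure {permA, permB} : Subgroup (Equiv.Perm (Fin 28)))) := by
  have h := nonempty_closure_mulEquiv (signedPermSubgroup lineVec)
    (T := {(AU, permA), (BU, permB)}) ?_ ?_ ?_
  · rwa [Set.image_pair, Set.image_pair] at h
  · rintro ⟨g, π⟩ ⟨-, hv⟩ rfl
    ext1 i
    refine (lineVec_injective_up_to_sign _ _ ?_).symm
    simpa using hv i
  · rintro ⟨g, π⟩ ⟨hdet, hv⟩ rfl
    exact Units.ext (eq_one_of_mulVec_lineVec hdet hv)
  · rintro m (rfl | rfl)
    · exact ⟨det_Amat, Amat_mulVec_lineVec⟩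
    · exact ⟨det_Bmat, Bmat_mulVec_lineVec⟩

/-- An element of the stabilizer of `17` which together with `sigma2` generates it. -/
def tau : Equiv.Perm (Fin 28) := sigma1 * sigma2 * sigma2 * sigma3 * sigma2 * sigma1

/-- The permutations in terms of which all others are expressed as words. -/
def letterPerm : Fin 6 → Equiv.Perm (Fin 28) := ![sigma1, sigma2, sigma3, tau, permA, permB]

/-- The value tables of `letterPerm`, as digits in base `32`. -/
def letterTable : Fin 6 → ℕ :=
  ![1209810385263914605922257924857331125558304, 323184597638208669037131498925370067017544,
    680868706132621673035680675739451798063276, 1045446577458601132814781592015013718232456,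
    1198848469223191238303991102030518388185120, 1147530796403141422396031576514709511739543]

/-- The product of the letters of a word. -/
def wordPerm (w : List (Fin 6)) : Equiv.Perm (Fin 28) := (w.map letterPerm).prod

/-- The action of a word on `{0, …, 27}`, computed by looking up the value tables. -/
def wordFun (w : List (Fin 6)) (i : ℕ) : ℕ :=
  w.foldr (fun a j ↦ (letterTable a >>> (5 * j)) % 32) i

theorem letterPerm_val : ∀ a i, (letterPerm a i).val = (letterTable a >>> (5 * i.val)) % 32 := by
  decide +kernel

theorem wordPerm_cons (a : Fin 6) (w : List (Fin 6)) :
    wordPerm (a :: w) = letterPerm a * wordPerm w := by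
  simp [wordPerm]

theorem wordPerm_append (w w' : List (Fin 6)) :
    wordPerm (w ++ w') = wordPerm w * wordPerm w' := by
  simp [wordPerm]

theorem wordPerm_replicate (n : ℕ) (a : Fin 6) :
    wordPerm (List.replicate n a) = letterPerm a ^ n := by
  simp [wordPerm]

theorem wordPerm_singleton (a : Fin 6) : wordPerm [a] = letterPerm a := by
  simp [wordPerm]

theorem wordPerm_val (w : List (Fin 6)) (i : Fin 28) :
    (wordPerm w i).val = wordFun w i.val := by
  induction w with
  | nil => simp [wordPerm, wordFun]
  | cons a w ih =>
    rw [wordPerm_cons, Equiv.Perm.mul_apply, letterPerm_val, ih]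
    rfl

theorem wordPerm_eq {w w' : List (Fin 6)} (h : ∀ i < 28, wordFun w i = wordFun w' i) :
    wordPerm w = wordPerm w' :=
  Equiv.ext fun i ↦ Fin.ext <| by rw [wordPerm_val, wordPerm_val, h i i.isLt]

theorem wordPerm_mem {H : Subgroup (Equiv.Perm (Fin 28))} {w : List (Fin 6)}
    (h : ∀ a ∈ w, letterPerm a ∈ H) : wordPerm w ∈ H :=
  H.list_prod_mem <| by simpa using h

/-- Words in `sigma2` and `tau` taking `21` to each point other than `17`. -/
def stabWord : Fin 28 → List (Fin 6) :=
  ![[3, 3, 1, 3], [1, 1, 1, 1, 1, 3], [3, 1, 1, 3], [3, 3, 1, 1, 3], [1, 3, 3, 1, 1, 3],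
    [3, 1, 3, 1, 3], [1, 3, 3, 1, 1, 1, 3], [3, 3, 3, 1, 1, 3], [1, 3, 3, 1, 3],
    [1, 1, 3, 3, 1, 1, 3], [3, 1, 1, 1, 1, 3], [3, 3], [1, 3], [1, 3, 1, 3], [1, 1, 1, 3],
    [3, 1, 1, 1, 3], [3], [], [1, 3, 3], [1, 1, 3, 3, 1, 3], [3, 3, 1, 1, 1, 3], [],
    [1, 1, 3, 3], [1, 3, 1, 1, 3], [1, 1, 1, 1, 3], [1, 1, 3], [3, 1, 3], [3, 1, 1, 3, 3]]

/-- Words taking `17` to each point. -/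
def pointWord (p : Fin 28) : List (Fin 6) :=
  if p = 17 then [] else stabWord p ++ [2, 0, 2, 0, 0]

theorem wordFun_cons_stabWord : ∀ a ∈ [(1 : Fin 6), 3], ∀ p : Fin 28, p ≠ 17 →
    ∃ r : Fin 28, r.val = wordFun [a] p ∧ ∃ l < 8,
      ∀ i < 28, wordFun (a :: stabWord p) i = wordFun (stabWord r ++ List.replicate l 1) i := by
  decide +kernel

theorem wordFun_cons_pointWord : ∀ a ∈ [(0 : Fin 6), 1, 2], ∀ p : Fin 28,
    ∃ r : Fin 28, r.val = wordFun [a] p ∧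
      ∃ q : Fin 28, wordFun (pointWord r) q = wordFun (a :: pointWord p) 21 ∧ ∃ l < 8,
        ∀ i < 28, wordFun (a :: pointWord p) i =
          wordFun (pointWord r ++ (stabWord q ++ List.replicate l 1)) i := by
  decide +kernel

/-- The stabilizer of `17` in the group generated by `sigma1`, `sigma2` and `sigma3`. -/
def stabGroup : Subgroup (Equiv.Perm (Fin 28)) := Subgroup.closure {sigma2, tau}

theorem wordPerm_stabWord_mem (p : Fin 28) : wordPerm (stabWord p) ∈ stabGroup := by
  have hword : ∀ p, ∀ a ∈ stabWord p, a = 1 ∨ a = 3 := by decide +kernel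
  refine wordPerm_mem fun a ha ↦ Subgroup.subset_closure ?_
  rcases hword p a ha with rfl | rfl
  · exact .inl rfl
  · exact .inr rfl

theorem sigma2_mem_stabGroup : sigma2 ∈ stabGroup := Subgroup.subset_closure (.inl rfl)

theorem orderOf_sigma2 : orderOf sigma2 = 8 := by
  have h (n : ℕ) : sigma2 ^ n = wordPerm (List.replicate n 1) := (wordPerm_replicate n 1).symm
  refine orderOf_eq_prime_pow (p := 2) (n := 2) ?_ ?_
  · rw [h]
    intro h1
    have := congrArg Fin.val (congrArg (fun π ↦ π 0) h1)
    rw [wordPerm_val] at this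
    revert this
    decide +kernel
  · rw [h]
    exact wordPerm_eq (w' := []) (by decide +kernel)

theorem eq_letterPerm_apply {a : Fin 6} {p r : Fin 28} (h : r.val = wordFun [a] p) :
    r = letterPerm a p := by
  rw [← wordPerm_val, wordPerm_singleton] at h
  exact Fin.ext h

theorem card_stabGroup : Nat.card stabGroup = 216 := by
  have h := card_closure_of_transversal (S := {sigma2, tau}) (K := Subgroup.zpowers sigma2)
    (x := (21 : Fin 28)) (Finset.univ.erase 17) (fun p ↦ wordPerm (stabWord p))
    ((Subgroup.zpowers_le).2 sigma2_mem_stabGroup) ?_ (by decide) rfl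
    (fun p _ ↦ wordPerm_stabWord_mem p) ?_ ?_
  · rw [stabGroup, h, Nat.card_zpowers, orderOf_sigma2]
    rfl
  · intro k hk
    have hle : Subgroup.zpowers sigma2 ≤
        MulAction.stabilizer (Equiv.Perm (Fin 28)) (21 : Fin 28) := by
      rw [Subgroup.zpowers_le]
      decide +kernel
    exact hle hk
  · have : ∀ p : Fin 28, p ≠ 17 → wordFun (stabWord p) 21 = p := by decide +kernel
    intro p hp
    exact Fin.ext ((wordPerm_val _ _).trans (this p (Finset.ne_of_mem_erase hp)))
  · have key : ∀ a ∈ [(1 : Fin 6), 3], ∀ p ∈ Finset.univ.erase (17 : Fin 28),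
        letterPerm a • p ∈ Finset.univ.erase (17 : Fin 28) ∧ ∃ k ∈ Subgroup.zpowers sigma2,
          letterPerm a * wordPerm (stabWord p) = wordPerm (stabWord (letterPerm a • p)) * k := by
      intro a ha p hp
      have hfix : letterPerm a 17 = 17 := by
        revert a
        decide +kernel
      refine ⟨Finset.mem_erase.2 ⟨fun h ↦ Finset.ne_of_mem_erase hp
        ((letterPerm a).injective (h.trans hfix.symm)), Finset.mem_univ _⟩, ?_⟩
      obtain ⟨r, hr, l, -, h⟩ := wordFun_cons_stabWord a ha p (Finset.ne_of_mem_erase hp)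
      refine ⟨sigma2 ^ l, Subgroup.npow_mem_zpowers _ _, ?_⟩
      rw [← wordPerm_cons, wordPerm_eq h, wordPerm_append, wordPerm_replicate,
        eq_letterPerm_apply hr]
      rfl
    rintro s (rfl | rfl)
    · exact key 1 (by decide)
    · exact key 3 (by decide)

theorem sigma_mem_closure : sigma1 ∈ Subgroup.closure {sigma1, sigma2, sigma3} ∧
    sigma2 ∈ Subgroup.closure {sigma1, sigma2, sigma3} ∧
    sigma3 ∈ Subgroup.closure {sigma1, sigma2, sigma3} :=
  ⟨Subgroup.subset_closure (by simp), Subgroup.subset_closure (by simp),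
    Subgroup.subset_closure (by simp)⟩

theorem card_closure_sigma :
    Nat.card (Subgroup.closure {sigma1, sigma2, sigma3} : Subgroup (Equiv.Perm (Fin 28))) =
      6048 := by
  obtain ⟨h0, h1, h2⟩ := sigma_mem_closure
  have hstab : stabGroup ≤ Subgroup.closure {sigma1, sigma2, sigma3} := by
    rw [stabGroup, Subgroup.closure_le]
    rintro s (rfl | rfl)
    · exact h1
    · exact mul_mem (mul_mem (mul_mem (mul_mem (mul_mem h0 h1) h1) h2) h1) h0
  have h := card_closure_of_transversal (S := {sigma1, sigma2, sigma3}) (K := stabGroup)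
    (x := (17 : Fin 28)) Finset.univ (fun p ↦ wordPerm (pointWord p)) hstab ?_
    (Finset.mem_univ _) rfl ?_ ?_ ?_
  · rw [h, card_stabGroup]
    rfl
  · intro k hk
    have hle : stabGroup ≤ MulAction.stabilizer (Equiv.Perm (Fin 28)) (17 : Fin 28) := by
      rw [stabGroup, Subgroup.closure_le]
      rintro s (rfl | rfl)
      · change sigma2 17 = 17
        decide +kernel
      · change tau 17 = 17
        decide +kernel
    exact hle hk
  · intro p _
    rw [pointWord]
    split_ifs
    · exact one_mem _
    · rw [wordPerm_append]
      refine mul_mem (hstab (wordPerm_stabWord_mem p)) (wordPerm_mem ?_)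
      simpa using ⟨h2, h0, h2, h0⟩
  · have : ∀ p : Fin 28, wordFun (pointWord p) 17 = p := by decide +kernel
    intro p _
    exact Fin.ext ((wordPerm_val _ _).trans (this p))
  · have key : ∀ a ∈ [(0 : Fin 6), 1, 2], ∀ p : Fin 28, ∃ k ∈ stabGroup,
        letterPerm a * wordPerm (pointWord p) = wordPerm (pointWord (letterPerm a • p)) * k := by
      intro a ha p
      obtain ⟨r, hr, q, -, l, -, h⟩ := wordFun_cons_pointWord a ha p
      refine ⟨wordPerm (stabWord q) * sigma2 ^ l,
        mul_mem (wordPerm_stabWord_mem q) (pow_mem sigma2_mem_stabGroup l), ?_⟩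
      rw [← wordPerm_cons, wordPerm_eq h, wordPerm_append, wordPerm_append, wordPerm_replicate,
        eq_letterPerm_apply hr]
      rfl
    rintro s (rfl | rfl | rfl) p -
    · exact ⟨Finset.mem_univ _, key 0 (by decide) p⟩
    · exact ⟨Finset.mem_univ _, key 1 (by decide) p⟩
    · exact ⟨Finset.mem_univ _, key 2 (by decide) p⟩

theorem closure_perm_eq_closure_sigma :
    Subgroup.closure {permA, permB} = Subgroup.closure {sigma1, sigma2, sigma3} := by
  apply le_antisymm <;> rw [Subgroup.closure_le]
  · obtain ⟨h0, h1, h2⟩ := sigma_mem_closure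
    rintro s (rfl | rfl)
    · exact mul_mem h0 h0
    · exact mul_mem (mul_mem (mul_mem (mul_mem h0 h1) h2) h1) h2
  · have key (a : Fin 6) (w : List (Fin 6)) (h : ∀ i < 28, wordFun [a] i = wordFun w i)
        (hw : ∀ b ∈ w, b = 4 ∨ b = 5) : letterPerm a ∈ Subgroup.closure {permA, permB} := by
      rw [← wordPerm_singleton, wordPerm_eq h]
      refine wordPerm_mem fun b hb ↦ Subgroup.subset_closure ?_
      rcases hw b hb with rfl | rfl
      · exact .inl rfl
      · exact .inr rfl
    rintro s (rfl | rfl | rfl)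
    · exact key 0 [5, 4, 5, 5, 5, 5, 5, 4, 5, 5, 4, 5, 5, 5, 5, 5, 4, 5]
        (by decide +kernel) (by decide)
    · exact key 1 [4, 5, 4, 5, 5, 5, 5, 4, 5, 4, 5, 5, 4, 5, 5, 4, 5]
        (by decide +kernel) (by decide)
    · exact key 2 [4, 5, 5, 4, 5, 5, 5, 5, 4, 5, 4, 5, 5, 4, 5]
        (by decide +kernel) (by decide)

/-- The subgroup of GL₇(ℚ) generated by A and B is a finite group of order 6048,
isomorphic to the subgroup of S₂₈ generated by σ₁, σ₂, σ₃. -/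
theorem matrix_group_order_and_iso :
    Nat.card (Subgroup.closure {AU, BU} : Subgroup (GL (Fin 7) ℚ)) = 6048 ∧
      Nonempty ((Subgroup.closure {AU, BU} : Subgroup (GL (Fin 7) ℚ)) ≃*
        (Subgroup.closure {sigma1, sigma2, sigma3} : Subgroup (Equiv.Perm (Fin 28)))) := by
  obtain ⟨e⟩ := nonempty_closure_mulEquiv_closure_perm
  rw [closure_perm_eq_closure_sigma] at e
  exact ⟨(Nat.card_congr e.toEquiv).trans card_closure_sigma, ⟨e⟩⟩
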